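/- Let n ≥ 2 and let g̃ : [0,1] → ℝ be a bounded measurable single-peaked function, i.e., there exists m ∈ [0,1] such that g̃ is nondecreasing on [0,m] and nonincreasing on [m,1]. Then there exist 0 ≤ a ≤ S ≤ 1 such that the function P̂ defined by P̂(s) = (1/a)∫_0^a (1−t)^{n−1} dt for s ∈ [0,a) (this case being vacuous if a = 0), P̂(s) = (1−s)^{n−1} for s ∈ [a, S], and P̂(s) = 0 for s ∈ (S, 1], is feasible and maximizes ∫_0^1 g̃(s) P(s) ds over all feasible P. -/

import Mathlib

open MeasureTheory Set

/-- A quantile interim allocation is feasible if it maps `[0,1]` into `[0,1]`, is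
nonincreasing, and is weakly majorized by `s ↦ (1−s)^{n−1}` (Border's condition). -/
def Feasible (n : ℕ) (P : ℝ → ℝ) : Prop :=
  (∀ s ∈ Icc (0:ℝ) 1, P s ∈ Icc (0:ℝ) 1) ∧
  AntitoneOn P (Icc (0:ℝ) 1) ∧
  ∀ x ∈ Icc (0:ℝ) 1, (∫ t in (0:ℝ)..x, P t) ≤ ∫ t in (0:ℝ)..x, (1 - t) ^ (n - 1)

lemma clamp_anti {P : ℝ → ℝ} (hP : AntitoneOn P (Icc (0:ℝ) 1)) :
    Antitone (fun s => P (max 0 (min s 1))) := by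
  intro x y hxy
  apply hP
  · simp
  · simp
  · gcongr

lemma clamp_eq {s : ℝ} (hs : s ∈ Icc (0:ℝ) 1) : max 0 (min s 1) = s := by
  rw [min_eq_left hs.2, max_eq_right hs.1]

lemma mul_anti_int {f P : ℝ → ℝ} (hf : IntervalIntegrable f volume 0 1)
    (hP : AntitoneOn P (Icc (0:ℝ) 1)) :
    IntervalIntegrable (fun s => f s * P s) volume 0 1 := by
  have hA := clamp_anti hP
  have h1 : IntervalIntegrable (fun s => f s * P (max 0 (min s 1))) volume 0 1 := by
    rw [intervalIntegrable_iff_integrableOn_Ioc_of_le zero_le_one] at hf ⊢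
    refine Integrable.mul_bdd (c := max |P 0| |P 1|) hf hA.measurable.aestronglyMeasurable ?_
    refine Filter.Eventually.of_forall fun s => ?_
    have hm : max 0 (min s 1) ∈ Icc (0:ℝ) 1 := by simp
    have a1 := hP (by simp) hm hm.1
    have a2 := hP hm (by simp) hm.2
    rw [Real.norm_eq_abs, max_comm |P 0|]
    exact abs_le_max_abs_abs a2 a1
  refine h1.congr ?_
  intro s hs
  rw [uIoc_of_le zero_le_one] at hs
  simp only
  rw [clamp_eq ⟨hs.1.le, hs.2⟩]

lemma congr_except {f g : ℝ → ℝ} {a b x : ℝ} (hab : a ≤ b)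
    (h : ∀ s, a < s → s ≤ b → s ≠ x → f s = g s) :
    ∫ s in a..b, f s = ∫ s in a..b, g s := by
  apply intervalIntegral.integral_congr_ae
  have : ∀ᵐ s : ℝ, s ≠ x := by simp [ae_iff]
  filter_upwards [this] with s hs hm
  rw [uIoc_of_le hab] at hm
  exact h s hm.1 hm.2 hs

lemma sub_int {f : ℝ → ℝ} {a b : ℝ} (hf : IntervalIntegrable f volume 0 1)
    (ha : a ∈ Icc (0:ℝ) 1) (hb : b ∈ Icc (0:ℝ) 1) : IntervalIntegrable f volume a b := by
  apply hf.mono_set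
  rw [uIcc_of_le zero_le_one]
  exact uIcc_subset_Icc ha hb

/-- Key lemma. -/
lemma key {f P : ℝ → ℝ} (hf : IntervalIntegrable f volume 0 1)
    (hP : AntitoneOn P (Icc (0:ℝ) 1)) (hP0 : ∀ s ∈ Icc (0:ℝ) 1, 0 ≤ P s)
    (h : ∀ x ∈ Icc (0:ℝ) 1, ∫ s in (0:ℝ)..x, f s ≤ 0) :
    ∫ s in (0:ℝ)..1, f s * P s ≤ 0 := by
  set Q : ℝ → ℝ := fun s => P (max 0 (min s 1)) with hQ
  have hA : Antitone Q := clamp_anti hP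
  have hQP : ∀ s ∈ Icc (0:ℝ) 1, Q s = P s := fun s hs => by simp only [hQ]; rw [clamp_eq hs]
  set T : Set (ℝ × ℝ) := {p | p.2 ≤ Q p.1} with hT
  have hTm : MeasurableSet T :=
    measurableSet_le measurable_snd (hA.measurable.comp measurable_fst)
  set K : ℝ → ℝ → ℝ := fun s u => T.indicator (fun p => f p.1 * 1) (s, u) with hK
  have hf' : IntegrableOn f (Ioc 0 1) :=
    (intervalIntegrable_iff_integrableOn_Ioc_of_le zero_le_one).1 hf
  have hKi : Integrable (Function.uncurry K)
      ((volume.restrict (Ioc (0:ℝ) 1)).prod (volume.restrict (Ioc (0:ℝ) (P 0)))) := by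
    have : Integrable (fun p : ℝ × ℝ => f p.1 * (1:ℝ))
      ((volume.restrict (Ioc (0:ℝ) 1)).prod (volume.restrict (Ioc (0:ℝ) (P 0)))) :=
      Integrable.mul_prod hf' (integrable_const (1:ℝ))
    exact this.indicator hTm
  have hsw := integral_integral_swap hKi
  have e1 : ∫ s in (0:ℝ)..1, f s * P s
      = ∫ s in Ioc (0:ℝ) 1, ∫ u in Ioc (0:ℝ) (P 0), K s u := by
    rw [intervalIntegral.integral_of_le zero_le_one]
    apply setIntegral_congr_fun measurableSet_Ioc
    intro s hs
    have hs' : s ∈ Icc (0:ℝ) 1 := ⟨hs.1.le, hs.2⟩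
    have hle : P s ≤ P 0 := hP (by simp) hs' hs'.1
    have : ∀ u, K s u = (Iic (P s)).indicator (fun _ => f s) u := by
      intro u
      simp only [hK, hT, indicator, mem_ofPred_eq, mem_Iic, hQP s hs', mul_one]
    simp only [this]
    rw [setIntegral_indicator measurableSet_Iic, Ioc_inter_Iic, min_eq_right hle,
      setIntegral_const]
    simp [hP0 s hs', mul_comm]
  rw [e1, hsw]
  apply setIntegral_nonpos measurableSet_Ioc
  intro u hu
  set A : Set ℝ := {s | s ∈ Icc (0:ℝ) 1 ∧ u ≤ Q s} with hAdef
  have h0 : (0:ℝ) ∈ A := ⟨by simp, by rw [hQP 0 (by simp)]; exact hu.2⟩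
  have hbd : BddAbove A := ⟨1, fun s hs => hs.1.2⟩
  set x := sSup A with hx
  have hx0 : 0 ≤ x := le_csSup hbd h0
  have hx1 : x ≤ 1 := csSup_le ⟨0, h0⟩ fun s hs => hs.1.2
  have hxm : x ∈ Icc (0:ℝ) 1 := ⟨hx0, hx1⟩
  have e2 : ∫ s in Ioc (0:ℝ) 1, K s u = ∫ s in (0:ℝ)..x, f s := by
    rw [← intervalIntegral.integral_of_le zero_le_one]
    have e3 : ∫ s in (0:ℝ)..1, K s u = ∫ s in (0:ℝ)..1, (Iic x).indicator f s := by
      apply congr_except (x := x) zero_le_one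
      intro s h1 h2 h3
      rcases lt_or_gt_of_ne h3 with h3 | h3
      · obtain ⟨y, hy, hsy⟩ := exists_lt_of_lt_csSup ⟨0, h0⟩ h3
        have : u ≤ Q s := hy.2.trans (hA hsy.le)
        simp [hK, hT, indicator, this, h3.le]
      · have : ¬ u ≤ Q s := fun hc => by
          have := le_csSup hbd (show s ∈ A from ⟨⟨h1.le, h2⟩, hc⟩)
          linarith
        simp [hK, hT, indicator, this, h3]
    rw [e3, intervalIntegral.integral_of_le zero_le_one, setIntegral_indicator measurableSet_Iic,
      Ioc_inter_Iic, min_eq_right hx1, intervalIntegral.integral_of_le hx0]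
  rw [e2]
  exact h x hxm

/-- averages of antitone functions -/
lemma avg_anti {q : ℝ → ℝ} (hq : AntitoneOn q (Icc (0:ℝ) 1)) {a c x : ℝ}
    (hqi : IntervalIntegrable q volume 0 1)
    (ha : a ∈ Icc (0:ℝ) 1) (hc : c * a = ∫ t in (0:ℝ)..a, q t) (hx : x ∈ Icc (0:ℝ) a) :
    c * x ≤ ∫ t in (0:ℝ)..x, q t := by
  have hx1 : x ∈ Icc (0:ℝ) 1 := ⟨hx.1, hx.2.trans ha.2⟩
  have h01 : (0:ℝ) ∈ Icc (0:ℝ) 1 := by simp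
  rcases le_total c (q x) with h | h
  · have := intervalIntegral.integral_mono_on (f := fun _ => c) hx.1 (by simp) (sub_int hqi h01 hx1)
      (fun t ht => h.trans (hq ⟨ht.1, ht.2.trans hx1.2⟩ hx1 ht.2))
    simp at this
    linarith
  · have := intervalIntegral.integral_mono_on (g := fun _ => c) hx.2 (sub_int hqi hx1 ha) (by simp)
      (fun t ht => (hq hx1 ⟨hx1.1.trans ht.1, ht.2.trans ha.2⟩ ht.1).trans h)
    have e := intervalIntegral.integral_add_adjacent_intervals (sub_int hqi h01 hx1) (sub_int hqi hx1 ha)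
    simp at this
    linarith

noncomputable def PH (n : ℕ) (a S : ℝ) (s : ℝ) : ℝ :=
  if s < a then (1 / a) * ∫ t in (0:ℝ)..a, (1 - t) ^ (n - 1)
  else if s ≤ S then (1 - s) ^ (n - 1) else 0

lemma q_anti (n : ℕ) : AntitoneOn (fun t : ℝ => (1 - t) ^ (n - 1)) (Icc (0:ℝ) 1) := by
  intro x hx y hy hxy
  have := hy.2
  have h1 : (0:ℝ) ≤ 1 - y := by linarith
  simp only
  gcongr

lemma q_int (n : ℕ) (a b : ℝ) :
    IntervalIntegrable (fun t : ℝ => (1 - t) ^ (n - 1)) volume a b := by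
  apply Continuous.intervalIntegrable
  fun_prop

lemma c_mul (n : ℕ) {a : ℝ} :
    ((1 / a) * ∫ t in (0:ℝ)..a, (1 - t) ^ (n - 1)) * a = ∫ t in (0:ℝ)..a, (1 - t) ^ (n - 1) := by
  rcases eq_or_ne a 0 with h | h
  · subst h; simp
  · field_simp

lemma PH_anti (n : ℕ) {a S : ℝ} (ha : 0 ≤ a) (haS : a ≤ S) (hS : S ≤ 1) :
    (∀ s ∈ Icc (0:ℝ) 1, PH n a S s ∈ Icc (0:ℝ) 1) ∧ AntitoneOn (PH n a S) (Icc (0:ℝ) 1) := by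
  have ha1 : a ∈ Icc (0:ℝ) 1 := ⟨ha, haS.trans hS⟩
  have hcm := c_mul n (a := a)
  unfold PH
  set c := (1 / a) * ∫ t in (0:ℝ)..a, (1 - t) ^ (n - 1) with hc
  have hq0 : ∀ s ∈ Icc (0:ℝ) 1, 0 ≤ (1 - s) ^ (n - 1) := fun s hs =>
    pow_nonneg (by linarith [hs.2]) _
  have hq1 : ∀ s ∈ Icc (0:ℝ) 1, (1 - s) ^ (n - 1) ≤ 1 := fun s hs =>
    pow_le_one₀ (by linarith [hs.2]) (by linarith [hs.1])
  have hq := q_anti n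
  have hc1 : 0 < a → c ≤ 1 := by
    intro h
    have := intervalIntegral.integral_mono_on (g := fun _ => (1:ℝ)) ha (q_int n 0 a) (by simp)
      (fun t ht => hq1 t ⟨ht.1, ht.2.trans ha1.2⟩)
    simp at this
    nlinarith
  have hca : 0 < a → (1 - a) ^ (n - 1) ≤ c := by
    intro h
    have := intervalIntegral.integral_mono_on (f := fun _ => (1 - a) ^ (n - 1)) ha (by simp)
      (q_int n 0 a) (fun t ht => hq ⟨ht.1, ht.2.trans ha1.2⟩ ha1 ht.2)
    simp at this
    nlinarith
  have hqa := hq0 a ha1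
  constructor
  · intro s hs
    split_ifs with h1 h2
    · have h : 0 < a := lt_of_le_of_lt hs.1 h1
      exact ⟨hqa.trans (hca h), hc1 h⟩
    · exact ⟨hq0 s hs, hq1 s hs⟩
    · simp
  · intro x hx y hy hxy
    simp only
    by_cases hya : y < a
    · rw [if_pos hya, if_pos (by linarith)]
    rw [if_neg hya]
    by_cases hxa : x < a
    · have h : 0 < a := lt_of_le_of_lt hx.1 hxa
      rw [if_pos hxa]
      split_ifs
      · exact (hq ha1 hy (by linarith)).trans (hca h)
      · exact hqa.trans (hca h)
    rw [if_neg hxa]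
    split_ifs with h1 h2
    · exact hq hx hy hxy
    · linarith
    · exact hq0 x hx
    · exact le_rfl

lemma PH_feas (n : ℕ) {a S : ℝ} (ha : 0 ≤ a) (haS : a ≤ S) (hS : S ≤ 1) :
    Feasible n (PH n a S) := by
  obtain ⟨h1, h2⟩ := PH_anti n ha haS hS
  refine ⟨h1, h2, ?_⟩
  intro x hx
  have ha1 : a ∈ Icc (0:ℝ) 1 := ⟨ha, haS.trans hS⟩
  have h01 : (0:ℝ) ∈ Icc (0:ℝ) 1 := by simp
  have hPi : IntervalIntegrable (PH n a S) volume 0 1 := by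
    apply AntitoneOn.intervalIntegrable
    rwa [uIcc_of_le zero_le_one]
  have hcm := c_mul n (a := a)
  have low : ∀ y, 0 ≤ y → y ≤ a → ∫ t in (0:ℝ)..y, PH n a S t
      = ((1 / a) * ∫ t in (0:ℝ)..a, (1 - t) ^ (n - 1)) * y := by
    intro y hy0 hya
    rw [congr_except (x := a) (g := fun _ => (1 / a) * ∫ t in (0:ℝ)..a, (1 - t) ^ (n - 1)) hy0]
    · rw [intervalIntegral.integral_const, smul_eq_mul]; ring
    · intro s hs1 hs2 hs3
      have : s < a := lt_of_le_of_ne (hs2.trans hya) hs3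
      simp [PH, this]
  rcases le_total x a with h | h
  · rw [low x hx.1 h]
    exact avg_anti (q_anti n) (q_int n 0 1) ha1 hcm ⟨hx.1, h⟩
  · rw [← intervalIntegral.integral_add_adjacent_intervals (sub_int hPi h01 ha1) (sub_int hPi ha1 hx),
      ← intervalIntegral.integral_add_adjacent_intervals (q_int n 0 a) (q_int n a x), low a ha le_rfl,
      hcm]
    gcongr
    refine intervalIntegral.integral_mono_on h (sub_int hPi ha1 hx) (q_int n a x) ?_
    intro t ht
    have : ¬ t < a := not_lt.2 ht.1
    simp only [PH, if_neg this]
    split_ifs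
    · exact le_rfl
    · exact pow_nonneg (by linarith [ht.2, hx.2]) _

/-- The pooling point. -/
lemma pool {g : ℝ → ℝ} (hg : IntervalIntegrable g volume 0 1) {m : ℝ} (hm : m ∈ Icc (0:ℝ) 1)
    (hmono : MonotoneOn g (Icc (0:ℝ) m)) (hanti : AntitoneOn g (Icc m 1)) :
    ∃ a l : ℝ, m ≤ a ∧ a ≤ 1 ∧ (∫ t in (0:ℝ)..a, g t) = l * a ∧
      (∀ x ∈ Icc 0 a, (∫ t in (0:ℝ)..x, g t) ≤ l * x) ∧ ∀ s, a < s → s ≤ 1 → g s ≤ l := by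
  have h01 : (0:ℝ) ∈ Icc (0:ℝ) 1 := by simp
  rcases eq_or_lt_of_le hm.1 with h0 | h0
  · refine ⟨0, g 0, h0.symm.le, zero_le_one, by simp, ?_, ?_⟩
    · intro x hx
      have : x = 0 := le_antisymm hx.2 hx.1
      simp [this]
    · intro s hs hs1
      subst h0
      exact hanti h01 ⟨hs.le, hs1⟩ hs.le
  · have hcont : ContinuousOn (fun x => (∫ t in (0:ℝ)..x, g t) / x) (Icc m 1) := by
      apply ContinuousOn.div _ continuousOn_id
      · intro x hx; exact (lt_of_lt_of_le h0 hx.1).ne'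
      · have := intervalIntegral.continuousOn_primitive_interval' hg (a := 0) (by simp)
        rw [uIcc_of_le zero_le_one] at this
        exact this.mono (Icc_subset_Icc_left hm.1)
    obtain ⟨a, ha, hmax⟩ := isCompact_Icc.exists_isMaxOn (nonempty_Icc.2 hm.2) hcont
    have ha0 : 0 < a := lt_of_lt_of_le h0 ha.1
    have ha1 : a ∈ Icc (0:ℝ) 1 := ⟨ha0.le, ha.2⟩
    set l := (∫ t in (0:ℝ)..a, g t) / a with hl
    have hla : (∫ t in (0:ℝ)..a, g t) = l * a := by rw [hl]; field_simp
    have hbig : ∀ x ∈ Icc m 1, (∫ t in (0:ℝ)..x, g t) ≤ l * x := by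
      intro x hx
      have h := hmax hx
      simp only [mem_ofPred_eq] at h
      rwa [div_le_iff₀ (lt_of_lt_of_le h0 hx.1)] at h
    refine ⟨a, l, ha.1, ha.2, hla, ?_, ?_⟩
    · intro x hx
      rcases le_total m x with hxm | hxm
      · exact hbig x ⟨hxm, hx.2.trans ha.2⟩
      have hx1 : x ∈ Icc (0:ℝ) 1 := ⟨hx.1, hx.2.trans ha.2⟩
      rcases le_total (g x) l with h | h
      · have := intervalIntegral.integral_mono_on (g := fun _ => l) hx.1 (sub_int hg h01 hx1) (by simp)
          (fun t ht => (hmono ⟨ht.1, ht.2.trans hxm⟩ ⟨hx.1, hxm⟩ ht.2).trans h)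
        simp at this
        linarith
      · have := intervalIntegral.integral_mono_on (f := fun _ => l) hxm (by simp) (sub_int hg hx1 hm)
          (fun t ht => h.trans (hmono ⟨hx.1, hxm⟩ ⟨hx.1.trans ht.1, ht.2⟩ ht.1))
        have e := intervalIntegral.integral_add_adjacent_intervals (sub_int hg h01 hx1) (sub_int hg hx1 hm)
        have := hbig m ⟨le_rfl, hm.2⟩
        simp at *
        linarith
    · intro s hs hs1
      by_contra! hc
      have hsm : s ∈ Icc m 1 := ⟨ha.1.trans hs.le, hs1⟩
      have hs01 : s ∈ Icc (0:ℝ) 1 := ⟨ha0.le.trans hs.le, hs1⟩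
      have := intervalIntegral.integral_mono_on (f := fun _ => g s) hs.le (by simp) (sub_int hg ha1 hs01)
          (fun t ht => hanti ⟨ha.1.trans ht.1, ht.2.trans hs1⟩ hsm ht.2)
      have e := intervalIntegral.integral_add_adjacent_intervals (sub_int hg h01 ha1) (sub_int hg ha1 hs01)
      have h3 := hbig s hsm
      simp at this
      nlinarith

/-- If the quantile virtual surplus `g̃` is single-peaked, then some
lowball-lottery-auction allocation — pooling on `[0,a)`, following `(1−s)^{n−1}` on
`[a,S]`, and excluding `(S,1]` — is feasible and maximizes `∫₀¹ g̃ P`. -/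
theorem stmt_9 (n : ℕ) (hn : 2 ≤ n)
    (gt : ℝ → ℝ) (hgt_meas : Measurable gt)
    (hgt_bdd : ∃ C, ∀ s ∈ Icc (0:ℝ) 1, |gt s| ≤ C)
    (m : ℝ) (hm : m ∈ Icc (0:ℝ) 1)
    (hgt_mono : MonotoneOn gt (Icc (0:ℝ) m))
    (hgt_anti : AntitoneOn gt (Icc m 1)) :
    ∃ a S : ℝ, ∃ Phat : ℝ → ℝ, 0 ≤ a ∧ a ≤ S ∧ S ≤ 1 ∧
      (∀ s ∈ Ico (0:ℝ) a, Phat s = (1 / a) * ∫ t in (0:ℝ)..a, (1 - t) ^ (n - 1)) ∧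
      (∀ s ∈ Icc a S, Phat s = (1 - s) ^ (n - 1)) ∧
      (∀ s ∈ Ioc S 1, Phat s = 0) ∧
      Feasible n Phat ∧
      ∀ P : ℝ → ℝ, Feasible n P →
        (∫ s in (0:ℝ)..1, gt s * P s) ≤ ∫ s in (0:ℝ)..1, gt s * Phat s := by
  have h01 : (0:ℝ) ∈ Icc (0:ℝ) 1 := by simp
  have h11 : (1:ℝ) ∈ Icc (0:ℝ) 1 := by simp
  have hg : IntervalIntegrable gt volume 0 1 := by
    obtain ⟨C, hC⟩ := hgt_bdd
    rw [intervalIntegrable_iff_integrableOn_Ioc_of_le zero_le_one]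
    refine Measure.integrableOn_of_bounded (M := C) (by simp) hgt_meas.aestronglyMeasurable ?_
    refine (ae_restrict_iff' measurableSet_Ioc).2 (Filter.Eventually.of_forall fun s hs => ?_)
    exact hC s ⟨hs.1.le, hs.2⟩
  -- it suffices to find `a ≤ S` with the optimality property
  suffices H : ∃ a S : ℝ, 0 ≤ a ∧ a ≤ S ∧ S ≤ 1 ∧ ∀ P : ℝ → ℝ, Feasible n P →
        (∫ s in (0:ℝ)..1, gt s * P s) ≤ ∫ s in (0:ℝ)..1, gt s * PH n a S s by
    obtain ⟨a, S, ha, haS, hS, h⟩ := H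
    refine ⟨a, S, PH n a S, ha, haS, hS, ?_, ?_, ?_, PH_feas n ha haS hS, h⟩
    · intro s hs
      simp [PH, hs.2]
    · intro s hs
      simp [PH, hs.1, hs.2]
    · intro s hs
      have h1 : ¬ s < a := by linarith [hs.1]
      have h2 : ¬ s ≤ S := by linarith [hs.1]
      simp [PH, h1, h2]
  obtain ⟨a, l, hma, ha1, hGa, hGx, hgl⟩ := pool hg hm hgt_mono hgt_anti
  have ha0 : 0 ≤ a := hm.1.trans hma
  have ha : a ∈ Icc (0:ℝ) 1 := ⟨ha0, ha1⟩
  rcases le_total l 0 with hl | hl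
  · refine ⟨0, 0, le_rfl, le_rfl, zero_le_one, ?_⟩
    intro P hP
    have e : ∫ s in (0:ℝ)..1, gt s * PH n 0 0 s = 0 := by
      rw [congr_except (x := 0) (g := fun _ => 0) zero_le_one]
      · simp
      · intro s hs _ _
        simp [PH, hs.le.not_gt, hs.not_ge]
    rw [e]
    refine key hg hP.2.1 (fun s hs => (hP.1 s hs).1) ?_
    intro x hx
    rcases le_total x a with h | h
    · have := hGx x ⟨hx.1, h⟩
      nlinarith [hx.1]
    · rw [← intervalIntegral.integral_add_adjacent_intervals (sub_int hg h01 ha) (sub_int hg ha hx),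
        hGa]
      have : ∫ t in a..x, gt t ≤ ∫ t in a..x, (0:ℝ) := by
        refine intervalIntegral.integral_mono_on_of_le_Ioo h (sub_int hg ha hx) (by simp) ?_
        intro t ht
        exact (hgl t ht.1 (ht.2.le.trans hx.2)).trans hl
      simp at this
      nlinarith
  · set B : Set ℝ := insert a {s | s ∈ Icc a 1 ∧ 0 ≤ gt s} with hB
    have hBb : BddAbove B := ⟨1, by
      rintro s (rfl | hs)
      · exact ha1
      · exact hs.1.2⟩
    have haB : a ∈ B := by simp [hB]
    set S := sSup B with hS
    have haS : a ≤ S := le_csSup hBb haB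
    have hS1 : S ≤ 1 := by
      refine csSup_le ⟨a, haB⟩ ?_
      rintro s (rfl | hs)
      · exact ha1
      · exact hs.1.2
    have hSpos : ∀ s, a < s → s < S → 0 ≤ gt s := by
      intro s h1 h2
      obtain ⟨y, hy, hsy⟩ := exists_lt_of_lt_csSup ⟨a, haB⟩ h2
      rcases hy with rfl | hy
      · linarith
      · exact hy.2.trans (hgt_anti ⟨hma.trans h1.le, hsy.le.trans hy.1.2⟩
          ⟨hma.trans hy.1.1, hy.1.2⟩ hsy.le)
    have hSneg : ∀ s, S < s → s ≤ 1 → gt s < 0 := by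
      intro s h1 h2
      by_contra! hc
      have := le_csSup hBb (show s ∈ B from Or.inr ⟨⟨haS.trans h1.le, h2⟩, hc⟩)
      linarith
    refine ⟨a, S, ha0, haS, hS1, ?_⟩
    intro P hP
    set h : ℝ → ℝ := fun s => if s ≤ a then l else max (gt s) 0 with hh
    have hh0 : ∀ s ∈ Icc (0:ℝ) 1, 0 ≤ h s := by
      intro s _
      simp only [hh]
      split_ifs
      · exact hl
      · exact le_max_right _ _
    have hha : AntitoneOn h (Icc (0:ℝ) 1) := by
      intro x hx y hy hxy
      simp only [hh]
      split_ifs with h1 h2 h3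
      · exact le_rfl
      · linarith
      · exact max_le (hgl y (not_le.1 h1) hy.2) hl
      · push Not at *
        exact max_le_max (hgt_anti ⟨by linarith, hx.2⟩ ⟨by linarith, hy.2⟩ hxy) le_rfl
    have hhi : IntervalIntegrable h volume 0 1 := by
      apply AntitoneOn.intervalIntegrable
      rwa [uIcc_of_le zero_le_one]
    have hPi : IntervalIntegrable P volume 0 1 := by
      apply AntitoneOn.intervalIntegrable
      rw [uIcc_of_le zero_le_one]
      exact hP.2.1
    have hhlow : ∀ x, 0 ≤ x → x ≤ a → ∫ t in (0:ℝ)..x, h t = l * x := by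
      intro x hx0 hxa
      rw [congr_except (x := 0) (g := fun _ => l) hx0]
      · simp [mul_comm]
      · intro s _ h2 _
        simp [hh, h2.trans hxa]
    -- step 1
    have s1 : ∫ s in (0:ℝ)..1, (gt s - h s) * P s ≤ 0 := by
      refine key (hg.sub hhi) hP.2.1 (fun s hs => (hP.1 s hs).1) ?_
      intro x hx
      rw [intervalIntegral.integral_sub (sub_int hg h01 hx) (sub_int hhi h01 hx)]
      rcases le_total x a with hxa | hxa
      · rw [hhlow x hx.1 hxa]
        linarith [hGx x ⟨hx.1, hxa⟩]
      · rw [← intervalIntegral.integral_add_adjacent_intervals (sub_int hg h01 ha) (sub_int hg ha hx),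
          ← intervalIntegral.integral_add_adjacent_intervals (sub_int hhi h01 ha) (sub_int hhi ha hx),
          hGa, hhlow a ha0 le_rfl]
        have : ∫ t in a..x, gt t ≤ ∫ t in a..x, h t := by
          refine intervalIntegral.integral_mono_on_of_le_Ioo hxa (sub_int hg ha hx)
            (sub_int hhi ha hx) ?_
          intro t ht
          simp [hh, ht.1.not_ge]
        linarith
    -- step 2
    have s2 : ∫ s in (0:ℝ)..1, (P s - (1 - s) ^ (n - 1)) * h s ≤ 0 := by
      refine key (hPi.sub (q_int n 0 1)) hha hh0 ?_
      intro x hx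
      rw [intervalIntegral.integral_sub (sub_int hPi h01 hx) (q_int n 0 x)]
      linarith [hP.2.2 x hx]
    have i1 := mul_anti_int hg hP.2.1
    have i2 := mul_anti_int hhi hP.2.1
    have i3 := mul_anti_int hhi (q_anti n)
    have i4 := mul_anti_int hg (PH_anti n ha0 haS hS1).2
    have s1' : ∫ s in (0:ℝ)..1, gt s * P s ≤ ∫ s in (0:ℝ)..1, h s * P s := by
      simp only [sub_mul] at s1
      rw [intervalIntegral.integral_sub i1 i2] at s1
      linarith
    have s2' : ∫ s in (0:ℝ)..1, h s * P s ≤ ∫ s in (0:ℝ)..1, h s * (1 - s) ^ (n - 1) := by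
      have e : (fun s => (P s - (1 - s) ^ (n - 1)) * h s)
          = fun s => h s * P s - h s * (1 - s) ^ (n - 1) := by
        funext s; ring
      rw [e, intervalIntegral.integral_sub i2 i3] at s2
      linarith
    -- step 3
    have s3 : ∫ s in (0:ℝ)..1, h s * (1 - s) ^ (n - 1) = ∫ s in (0:ℝ)..1, gt s * PH n a S s := by
      rw [← intervalIntegral.integral_add_adjacent_intervals (sub_int i3 h01 ha) (sub_int i3 ha h11),
        ← intervalIntegral.integral_add_adjacent_intervals (sub_int i4 h01 ha) (sub_int i4 ha h11)]
      congr 1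
      · rw [congr_except (x := a) (g := fun s => l * (1 - s) ^ (n - 1)) ha0,
          congr_except (x := a) (f := fun s => gt s * PH n a S s)
            (g := fun s => gt s * ((1 / a) * ∫ t in (0:ℝ)..a, (1 - t) ^ (n - 1))) ha0]
        · rw [intervalIntegral.integral_const_mul, intervalIntegral.integral_mul_const, hGa]
          conv_lhs => rw [← c_mul n (a := a)]
          ring
        · intro s _ h2 h3
          simp [PH, lt_of_le_of_ne h2 h3]
        · intro s _ h2 _
          simp [hh, h2]
      · apply congr_except (x := S) ha1
        intro s h1 h2 h3
        rcases lt_or_gt_of_ne h3 with h4 | h4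
        · simp [hh, PH, h1.not_ge, h1.not_gt, h4.le, hSpos s h1 h4]
        · simp [hh, PH, h1.not_ge, h1.not_gt, h4.not_ge, (hSneg s h4 h2).le]
    exact s1'.trans (s2'.trans s3.le)
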